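/- arXiv:2605.10372 — 2 statements merged into one kernel-verified Lean document; each statement's English description precedes it below -/
import Mathlib

section
/- Let f ≥ 1 be a natural number, let n = 3f+1, and fix a subset B of the n nodes with |B| = f (the Byzantine nodes; the remaining 2f+1 nodes are honest). Let 1 ≤ n_c ≤ n and let S be a subset of size n_c chosen uniformly at random from all n_c-element subsets of the n nodes (sampling without replacement). Then the probability that S contains more than n_c/2 Byzantine nodes, i.e. P(|S ∩ B| > n_c/2), is at most exp(−n_c/18). -/
open Finset

theorem aux_desc (f n : ℕ) (h : 3 * f ≤ n) (k : ℕ) :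
    3 ^ k * f.descFactorial k ≤ n.descFactorial k := by
  induction k with
  | zero => simp
  | succ k ih =>
    rw [Nat.descFactorial_succ, Nat.descFactorial_succ]
    have h1 : 3 * (f - k) ≤ n - k := by omega
    calc 3 ^ (k + 1) * ((f - k) * f.descFactorial k)
        = (3 * (f - k)) * (3 ^ k * f.descFactorial k) := by ring
      _ ≤ _ := Nat.mul_le_mul h1 ih

theorem aux_choose (f n : ℕ) (h : 3 * f ≤ n) (k : ℕ) :
    3 ^ k * f.choose k ≤ n.choose k := by
  have h1 := aux_desc f n h k
  rw [Nat.descFactorial_eq_factorial_mul_choose, Nat.descFactorial_eq_factorial_mul_choose] at h1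
  have h2 : 0 < k.factorial := Nat.factorial_pos k
  refine Nat.le_of_mul_le_mul_left ?_ h2
  calc _ = 3 ^ k * (k.factorial * f.choose k) := by ring
    _ ≤ _ := h1

theorem aux_count (n nc : ℕ) (hnc : nc ≤ n) (T : Finset (Fin n)) :
    ((powersetCard nc (univ : Finset (Fin n))).filter (fun S => T ⊆ S)).card * n.choose T.card
      ≤ n.choose nc * nc.choose T.card := by
  by_cases hk : T.card ≤ nc
  · have h1 : ((powersetCard nc (univ : Finset (Fin n))).filter (fun S => T ⊆ S)).card
        ≤ (powersetCard (nc - T.card) (univ \ T)).card := by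
      apply Finset.card_le_card_of_injOn (fun S => S \ T)
      · intro S hS
        simp only [coe_filter, mem_powersetCard, Set.mem_ofPred_eq] at hS
        simp only [mem_coe, mem_powersetCard]
        refine ⟨sdiff_subset_sdiff (subset_univ _) le_rfl, ?_⟩
        rw [card_sdiff_of_subset hS.2, hS.1.2]
      · intro S hS S' hS' h
        simp only [coe_filter, mem_powersetCard, Set.mem_ofPred_eq] at hS hS'
        simp only at h
        rw [← sdiff_union_of_subset hS.2, h, sdiff_union_of_subset hS'.2]
    rw [card_powersetCard, card_sdiff_of_subset (subset_univ _), card_univ, Fintype.card_fin] at h1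
    rw [Nat.choose_mul hk, mul_comm]
    exact Nat.mul_le_mul_left _ h1
  · have : (powersetCard nc (univ : Finset (Fin n))).filter (fun S => T ⊆ S) = ∅ := by
      apply filter_eq_empty_iff.2
      intro S hS hT
      have := card_le_card hT
      rw [mem_powersetCard] at hS
      omega
    rw [this]; simp

theorem aux_mgf (f n nc : ℕ) (h : 3 * f ≤ n) (hnc : nc ≤ n)
    (B : Finset (Fin n)) (hB : B.card = f) :
    ∑ S ∈ powersetCard nc (univ : Finset (Fin n)), (2 : ℝ) ^ (S ∩ B).card
      ≤ n.choose nc * (4 / 3 : ℝ) ^ nc := by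
  have h1 : ∀ S : Finset (Fin n), (2 : ℝ) ^ (S ∩ B).card
      = ∑ T ∈ B.powerset, if T ⊆ S then (1 : ℝ) else 0 := by
    intro S
    rw [← sum_filter, sum_const, nsmul_eq_mul, mul_one]
    have : B.powerset.filter (fun T => T ⊆ S) = (S ∩ B).powerset := by
      ext T; simp only [mem_filter, mem_powerset, subset_inter_iff, and_comm]
    rw [this, card_powerset]; push_cast; rfl
  have hle : ∀ T ∈ B.powerset,
      ∑ S ∈ powersetCard nc (univ : Finset (Fin n)), (if T ⊆ S then (1 : ℝ) else 0)
      ≤ (n.choose nc : ℝ) * nc.choose T.card / n.choose T.card := by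
    intro T hT
    rw [← sum_filter, sum_const, nsmul_eq_mul, mul_one]
    have hp : 0 < n.choose T.card := Nat.choose_pos (by simpa using card_le_univ T)
    rw [le_div_iff₀ (by exact_mod_cast hp)]
    exact_mod_cast aux_count n nc hnc T
  calc _ = ∑ T ∈ B.powerset, ∑ S ∈ powersetCard nc (univ : Finset (Fin n)),
        (if T ⊆ S then (1 : ℝ) else 0) := by
        rw [sum_comm]; exact sum_congr rfl (fun S _ => h1 S)
    _ ≤ ∑ T ∈ B.powerset, (n.choose nc : ℝ) * nc.choose T.card / n.choose T.card :=
        sum_le_sum hle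
    _ = ∑ k ∈ range (f + 1), f.choose k • ((n.choose nc : ℝ) * nc.choose k / n.choose k) := by
        rw [sum_powerset_apply_card (fun k => (n.choose nc : ℝ) * nc.choose k / n.choose k), hB]
    _ ≤ ∑ k ∈ range (f + 1), (n.choose nc : ℝ) * ((1 / 3) ^ k * nc.choose k) := by
        apply sum_le_sum
        intro k hk
        rw [mem_range] at hk
        have hp : 0 < n.choose k := Nat.choose_pos (by omega)
        have hp' : (0 : ℝ) < n.choose k := by exact_mod_cast hp
        have hc : (3 : ℝ) ^ k * f.choose k ≤ n.choose k := by exact_mod_cast aux_choose f n h k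
        have hq : (f.choose k : ℝ) / n.choose k ≤ (1 / 3) ^ k := by
          rw [div_le_iff₀ hp', one_div, inv_pow, inv_mul_eq_div, le_div_iff₀ (by positivity)]
          linarith
        calc f.choose k • ((n.choose nc : ℝ) * nc.choose k / n.choose k)
            = (n.choose nc : ℝ) * ((f.choose k : ℝ) / n.choose k * nc.choose k) := by
              rw [nsmul_eq_mul]; ring
          _ ≤ _ := by gcongr
    _ ≤ ∑ k ∈ range (f + nc + 1), (n.choose nc : ℝ) * ((1 / 3) ^ k * nc.choose k) := by
        apply sum_le_sum_of_subset_of_nonneg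
        · apply range_subset_range.2; omega
        · intros; positivity
    _ = ∑ k ∈ range (nc + 1), (n.choose nc : ℝ) * ((1 / 3) ^ k * nc.choose k) := by
        symm
        apply sum_subset
        · apply range_subset_range.2; omega
        · intro k _ hk
          rw [mem_range] at hk
          rw [Nat.choose_eq_zero_of_lt (show nc < k by omega)]; simp
    _ = _ := by
        rw [← mul_sum]
        have := add_pow (1 / 3 : ℝ) 1 nc
        norm_num at this
        norm_num [this]

/-- A committee of size `nc` sampled uniformly from the `n = 3f+1` nodes
(uniform over all `nc`-element subsets, i.e. sampling without replacement)
contains more than `nc/2` Byzantine nodes (i.e. nodes of the fixed set `B`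
with `|B| = f`) with probability at most `exp (-nc/18)`. -/
theorem stmt_0 (f : ℕ) (hf : 1 ≤ f) (n : ℕ) (hn : n = 3 * f + 1)
    (B : Finset (Fin n)) (hB : B.card = f)
    (nc : ℕ) (hnc1 : 1 ≤ nc) (hnc2 : nc ≤ n) :
    (((Finset.powersetCard nc (Finset.univ : Finset (Fin n))).filter
        (fun S => nc < 2 * (S ∩ B).card)).card : ℝ) /
      ((Finset.powersetCard nc (Finset.univ : Finset (Fin n))).card : ℝ)
      ≤ Real.exp (-(nc : ℝ) / 18) := by
  have hN : 0 < n.choose nc := Nat.choose_pos hnc2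
  have hN' : (0 : ℝ) < n.choose nc := by exact_mod_cast hN
  have hm := aux_mgf f n nc (by omega) hnc2 B hB
  rw [card_powersetCard, card_univ, Fintype.card_fin, div_le_iff₀ hN']
  have hs : (0 : ℝ) < Real.sqrt 2 := by positivity
  have hs2 : Real.sqrt 2 ^ 2 = 2 := Real.sq_sqrt (by norm_num)
  have hs1 : 1 ≤ Real.sqrt 2 := by rw [Real.one_le_sqrt]; norm_num
  have hlow : (((powersetCard nc (univ : Finset (Fin n))).filter
        (fun S => nc < 2 * (S ∩ B).card)).card : ℝ) * Real.sqrt 2 ^ nc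
      ≤ ∑ S ∈ powersetCard nc (univ : Finset (Fin n)), (2 : ℝ) ^ (S ∩ B).card := by
    rw [← nsmul_eq_mul]
    refine le_trans (card_nsmul_le_sum _ (fun S => (2 : ℝ) ^ (S ∩ B).card) _ ?_)
      (sum_le_sum_of_subset_of_nonneg (filter_subset _ _) (by intros; positivity))
    intro S hS
    rw [mem_filter] at hS
    calc Real.sqrt 2 ^ nc ≤ Real.sqrt 2 ^ (2 * (S ∩ B).card) :=
          pow_le_pow_right₀ hs1 hS.2.le
      _ = 2 ^ (S ∩ B).card := by rw [pow_mul, hs2]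
  have he : (4 / 3 : ℝ) ≤ Real.exp (-1 / 18) * Real.sqrt 2 := by
    refine (pow_le_pow_iff_left₀ (by norm_num) (by positivity) (two_ne_zero)).1 ?_
    rw [mul_pow, hs2, ← Real.exp_nat_mul]
    have := Real.add_one_le_exp (((2 : ℕ) : ℝ) * (-1 / 18))
    norm_num at this ⊢
    linarith
  have hen : Real.exp (-(nc : ℝ) / 18) = Real.exp (-1 / 18) ^ nc := by
    rw [← Real.exp_nat_mul]; congr 1; ring
  have hp : (4 / 3 : ℝ) ^ nc ≤ Real.exp (-1 / 18) ^ nc * Real.sqrt 2 ^ nc := by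
    rw [← mul_pow]; exact pow_le_pow_left₀ (by norm_num) he nc
  rw [hen]
  refine le_of_mul_le_mul_right ?_ (pow_pos hs nc)
  calc _ ≤ _ := hlow
    _ ≤ _ := hm
    _ ≤ n.choose nc * (Real.exp (-1 / 18) ^ nc * Real.sqrt 2 ^ nc) := by gcongr
    _ = _ := by ring
end

section
/- Let f ≥ 1 be a natural number, n = 3f+1, and fix a subset B of the n nodes with |B| = f (the Byzantine nodes). Let ε > 0 and φ ≥ 1 be real numbers, and let n_c be a natural number with 1 ≤ n_c ≤ n and n_c ≥ 18·log(2φ/ε). If S is a subset of size n_c chosen uniformly at random from all n_c-element subsets of the n nodes, then the probability that more than n_c/2 of the sampled nodes are Byzantine, i.e. P(|S ∩ B| > n_c/2), is at most ε/(2φ). -/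
open Finset

lemma three_pow_choose (f n j : ℕ) (hn : 3 * f ≤ n) :
    3 ^ j * f.choose j ≤ n.choose j := by
  have h : 3 ^ j * f.descFactorial j ≤ n.descFactorial j := by
    induction j with
    | zero => simp
    | succ k ih =>
      rw [Nat.descFactorial_succ, Nat.descFactorial_succ]
      have h1 : 3 * (f - k) ≤ n - k := by omega
      calc 3 ^ (k+1) * ((f - k) * f.descFactorial k)
          = (3 * (f - k)) * (3 ^ k * f.descFactorial k) := by ring
        _ ≤ _ := Nat.mul_le_mul h1 ih
  rw [Nat.descFactorial_eq_factorial_mul_choose, Nat.descFactorial_eq_factorial_mul_choose] at h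
  have hp := Nat.factorial_pos j
  refine Nat.le_of_mul_le_mul_left ?_ hp
  calc _ = 3 ^ j * (j.factorial * f.choose j) := by ring
    _ ≤ _ := h

lemma superset_count (n nc : ℕ) (T : Finset (Fin n)) :
    ((powersetCard nc (univ : Finset (Fin n))).filter (fun S => T ⊆ S)).card
      ≤ if T.card ≤ nc then (n - T.card).choose (nc - T.card) else 0 := by
  split_ifs with h
  · have h2 : (powersetCard (nc - T.card) (univ \ T)).card
        = (n - T.card).choose (nc - T.card) := by
      rw [card_powersetCard, card_sdiff_of_subset (subset_univ T)]; simp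
    rw [← h2]
    refine card_le_card_of_injOn (fun S => S \ T) ?_ ?_
    · intro S hS
      simp only [coe_filter, mem_powersetCard, Set.mem_ofPred_eq] at hS
      simp only [mem_coe, mem_powersetCard]
      refine ⟨sdiff_subset_sdiff (subset_univ _) le_rfl, ?_⟩
      rw [card_sdiff_of_subset hS.2, hS.1.2]
    · intro S hS S' hS' he
      simp only [coe_filter, mem_powersetCard, Set.mem_ofPred_eq] at hS hS'
      simp only at he
      rw [← sdiff_union_of_subset hS.2, ← sdiff_union_of_subset hS'.2, he]
  · rw [Nat.le_zero, card_eq_zero, filter_eq_empty_iff]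
    intro S hS hT
    rw [mem_powersetCard] at hS
    have := card_le_card hT
    omega

lemma mgf_bound (f n nc : ℕ) (hn : 3 * f ≤ n) (B : Finset (Fin n)) (hB : B.card = f)
    (hnc : nc ≤ n) :
    ∑ S ∈ powersetCard nc (univ : Finset (Fin n)), (2:ℝ) ^ (S ∩ B).card
      ≤ (n.choose nc : ℝ) * (4/3) ^ nc := by
  have h1 : ∑ S ∈ powersetCard nc (univ : Finset (Fin n)), 2 ^ (S ∩ B).card
      = ∑ T ∈ B.powerset,
        ((powersetCard nc (univ : Finset (Fin n))).filter (fun S => T ⊆ S)).card := by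
    simp_rw [← card_powerset, card_eq_sum_ones, sum_filter]
    rw [sum_comm]
    refine sum_congr rfl fun S _ => ?_
    rw [← sum_filter]
    refine sum_congr ?_ fun _ _ => rfl
    ext T
    simp only [mem_powerset, mem_filter, subset_inter_iff]
    tauto
  have h2 : ∑ S ∈ powersetCard nc (univ : Finset (Fin n)), 2 ^ (S ∩ B).card
      ≤ ∑ j ∈ range (f + 1), f.choose j *
        (if j ≤ nc then (n - j).choose (nc - j) else 0) := by
    rw [h1]
    refine (sum_le_sum fun T _ => superset_count n nc T).trans ?_
    rw [sum_powerset_apply_card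
      (fun j => if j ≤ nc then (n - j).choose (nc - j) else 0), hB]
    simp
  have h3 : ∀ j, ((f.choose j *
        (if j ≤ nc then (n - j).choose (nc - j) else 0) : ℕ) : ℝ)
      ≤ (n.choose nc : ℝ) * ((1/3) ^ j * (nc.choose j : ℝ)) := by
    intro j
    split_ifs with h
    · have h4 := three_pow_choose f n j hn
      have h5 := Nat.choose_mul (n := n) h
      have h6 : 3 ^ j * (f.choose j * (n - j).choose (nc - j)) ≤ n.choose nc * nc.choose j := by
        rw [h5, ← mul_assoc]
        exact Nat.mul_le_mul_right _ h4
      have h7 : (3:ℝ) ^ j * ((f.choose j * (n - j).choose (nc - j) : ℕ) : ℝ)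
          ≤ n.choose nc * nc.choose j := by exact_mod_cast h6
      have h8 : (0:ℝ) < 3 ^ j := by positivity
      rw [one_div, inv_pow]
      calc _ = ((3:ℝ)^j)⁻¹ * ((3:ℝ) ^ j * ((f.choose j * (n - j).choose (nc - j) : ℕ) : ℝ)) := by
            field_simp
        _ ≤ ((3:ℝ)^j)⁻¹ * (n.choose nc * nc.choose j) := by gcongr
        _ = _ := by ring
    · simp only [mul_zero, Nat.cast_zero]; positivity
  have h9 : ∑ j ∈ range (f + 1), ((1/3 : ℝ) ^ j * (nc.choose j : ℝ)) ≤ (4/3) ^ nc := by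
    have e : (4/3 : ℝ) ^ nc = ∑ j ∈ range (nc + 1), ((1/3 : ℝ) ^ j * (nc.choose j : ℝ)) := by
      rw [show (4/3 : ℝ) = 1/3 + 1 by norm_num, add_pow]
      simp
    rw [e]
    have e2 : ∑ j ∈ range (nc + 1), ((1/3 : ℝ) ^ j * (nc.choose j : ℝ))
        = ∑ j ∈ range (nc + 1 + f), ((1/3 : ℝ) ^ j * (nc.choose j : ℝ)) := by
      refine sum_subset (range_subset_range.2 (by omega)) fun j _ hj => ?_
      rw [mem_range] at hj
      rw [Nat.choose_eq_zero_of_lt (by omega)]; simp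
    rw [e2]
    refine sum_le_sum_of_subset_of_nonneg (range_subset_range.2 (by omega)) fun j _ _ => ?_
    positivity
  calc _ = ((∑ S ∈ powersetCard nc (univ : Finset (Fin n)), 2 ^ (S ∩ B).card : ℕ) : ℝ) := by
        push_cast; rfl
    _ ≤ ((∑ j ∈ range (f + 1), f.choose j *
        (if j ≤ nc then (n - j).choose (nc - j) else 0) : ℕ) : ℝ) := by exact_mod_cast h2
    _ ≤ ∑ j ∈ range (f + 1), (n.choose nc : ℝ) * ((1/3) ^ j * (nc.choose j : ℝ)) := by
        rw [Nat.cast_sum]; exact sum_le_sum fun j _ => h3 j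
    _ ≤ _ := by rw [← mul_sum]; gcongr

/-- Lemma 5 (majority-honest-committee): if the committee size `nc` satisfies
`nc ≥ 18 · log (2φ/ε)`, then a uniformly random `nc`-element subset of the
`n = 3f+1` nodes contains more than `nc/2` Byzantine nodes (members of the
fixed set `B` with `|B| = f`) with probability at most `ε/(2φ)`. -/
theorem stmt_2 (f : ℕ) (hf : 1 ≤ f) (n : ℕ) (hn : n = 3 * f + 1)
    (B : Finset (Fin n)) (hB : B.card = f)
    (ε φ : ℝ) (hε : 0 < ε) (hφ : 1 ≤ φ)
    (nc : ℕ) (hnc1 : 1 ≤ nc) (hnc2 : nc ≤ n)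
    (hnc3 : 18 * Real.log (2 * φ / ε) ≤ (nc : ℝ)) :
    (((Finset.powersetCard nc (Finset.univ : Finset (Fin n))).filter
        (fun S => nc < 2 * (S ∩ B).card)).card : ℝ) /
      ((Finset.powersetCard nc (Finset.univ : Finset (Fin n))).card : ℝ)
      ≤ ε / (2 * φ) := by
  have hC : (0:ℝ) < (n.choose nc : ℝ) := by exact_mod_cast Nat.choose_pos hnc2
  have hs : (0:ℝ) < √2 := by positivity
  have hss : √2 ^ 2 = (2:ℝ) := Real.sq_sqrt (by norm_num)
  have hs1 : (1:ℝ) ≤ √2 := by rw [Real.one_le_sqrt]; norm_num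
  have hm := mgf_bound f n nc (by omega) B hB hnc2
  have hlow : (((Finset.powersetCard nc (Finset.univ : Finset (Fin n))).filter
        (fun S => nc < 2 * (S ∩ B).card)).card : ℝ) * √2 ^ nc
      ≤ ∑ S ∈ powersetCard nc (univ : Finset (Fin n)), (2:ℝ) ^ (S ∩ B).card := by
    rw [← nsmul_eq_mul, ← sum_const]
    refine le_trans ?_ (sum_le_sum_of_subset_of_nonneg (filter_subset
      (fun S => nc < 2 * (S ∩ B).card) _) fun S _ _ => by positivity)
    refine sum_le_sum fun S hS => ?_
    rw [mem_filter] at hS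
    calc √2 ^ nc ≤ √2 ^ (2 * (S ∩ B).card) := pow_le_pow_right₀ hs1 hS.2.le
      _ = _ := by rw [pow_mul, hss]
  have hbase : (4/3 : ℝ) ≤ Real.exp (-(1/18)) * √2 := by
    refine le_of_sq_le_sq ?_ (by positivity)
    rw [mul_pow, hss, ← Real.exp_nat_mul]
    have := Real.add_one_le_exp (-(1/9) : ℝ)
    have e : ((2:ℕ):ℝ) * (-(1/18)) = -(1/9) := by norm_num
    rw [e]
    linarith
  have hpow : (4/3 : ℝ) ^ nc ≤ Real.exp (-(nc/18)) * √2 ^ nc := by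
    calc (4/3 : ℝ) ^ nc ≤ (Real.exp (-(1/18)) * √2) ^ nc := by gcongr
      _ = _ := by rw [mul_pow, ← Real.exp_nat_mul]; ring_nf
  have hexp : Real.exp (-(nc/18)) ≤ ε / (2 * φ) := by
    have hpos : 0 < ε / (2 * φ) := by positivity
    rw [← Real.le_log_iff_exp_le hpos, ← inv_div (2 * φ) ε, Real.log_inv]
    linarith
  rw [card_powersetCard, card_univ, Fintype.card_fin, div_le_iff₀ hC]
  refine le_of_mul_le_mul_right ?_ (pow_pos hs nc)
  calc _ ≤ _ := hlow
    _ ≤ _ := hm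
    _ ≤ (n.choose nc : ℝ) * (Real.exp (-(nc/18)) * √2 ^ nc) := by gcongr
    _ ≤ (n.choose nc : ℝ) * (ε / (2 * φ) * √2 ^ nc) := by gcongr
    _ = _ := by ring
end
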